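/- arXiv:1008.0928 — 2 statements merged into one kernel-verified Lean document; each statement's English description precedes it below -/
import Mathlib

section
/- Let μ ∈ ℝ and define p : ℝ × (0,∞) → ℝ by p(x,t) = 2 ∫₀^∞ (exp(−(x−μs)²/(2s))/√(2πs)) · (exp(−s²/(2t))/√(2πt)) ds. Then for every x ≠ 0 and t > 0, p satisfies the fourth-order equation ∂p/∂t = (1/8)∂⁴p/∂x⁴ − (μ/2)∂³p/∂x³ + (μ²/2)∂²p/∂x², i.e. ∂p/∂t = (1/2)((1/2)∂²/∂x² − μ ∂/∂x)² p. -/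
open Real MeasureTheory

/-- Density of the iterated Brownian motion with drift `I^μ(t) = B₁^μ(|B₂(t)|)`. -/
noncomputable def iterBMDriftDensity (μ : ℝ) (x t : ℝ) : ℝ :=
  2 * ∫ s in Set.Ioi (0 : ℝ),
    (Real.exp (-(x - μ * s) ^ 2 / (2 * s)) / Real.sqrt (2 * π * s)) *
      (Real.exp (-s ^ 2 / (2 * t)) / Real.sqrt (2 * π * t))

/-- The operator `L f = (1/2) f'' − μ f'`. -/
noncomputable def driftOp (μ : ℝ) (f : ℝ → ℝ) : ℝ → ℝ :=
  fun y => (1 / 2) * iteratedDeriv 2 f y - μ * deriv f y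


open Filter Topology Set

noncomputable def kerW (μ a x t s : ℝ) : ℝ :=
  s ^ a * Real.exp (-(x ^ 2 / (2 * s)) - μ ^ 2 * s / 2 - s ^ 2 / (2 * t))

noncomputable def kerJ (μ a x t : ℝ) : ℝ := ∫ s in Ioi (0 : ℝ), kerW μ a x t s

lemma rpow_exp_bound (a c : ℝ) (hc : 0 < c) :
    ∃ C b : ℝ, 1 ≤ b ∧ 0 ≤ C ∧ ∀ s : ℝ, 0 < s → s ^ a * Real.exp (-(c / s)) ≤ C * s ^ b := by
  obtain ⟨m, hm⟩ := exists_nat_ge (1 - a)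
  refine ⟨m.factorial / c ^ m, a + m, by linarith, by positivity, ?_⟩
  intro s hs
  have h1 := Real.pow_div_factorial_le_exp (c / s) (by positivity) m
  have h2 : Real.exp (-(c / s)) ≤ m.factorial / c ^ m * s ^ m := by
    rw [Real.exp_neg, inv_le_comm₀ (Real.exp_pos _) (by positivity)]
    refine le_trans (le_of_eq ?_) h1
    rw [div_pow]
    field_simp
  rw [Real.rpow_add hs, Real.rpow_natCast]
  calc s ^ a * Real.exp (-(c / s)) ≤ s ^ a * (m.factorial / c ^ m * s ^ m) := by gcongr
    _ = _ := by ring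

lemma contOn_W (μ a x t : ℝ) : ContinuousOn (kerW μ a x t) (Ioi 0) := by
  unfold kerW
  refine ContinuousOn.mul ?_ ?_
  · exact ContinuousOn.rpow_const continuousOn_id (fun s hs => Or.inl (ne_of_gt hs))
  · refine Real.continuous_exp.comp_continuousOn ?_
    refine ContinuousOn.sub (ContinuousOn.sub (ContinuousOn.neg ?_) (by fun_prop)) (by fun_prop)
    refine ContinuousOn.div (by fun_prop) (by fun_prop) ?_
    intro s hs
    have : (0:ℝ) < s := hs
    positivity

lemma meas_W (μ a x t : ℝ) :
    AEStronglyMeasurable (kerW μ a x t) (volume.restrict (Ioi 0)) :=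
  (contOn_W μ a x t).aestronglyMeasurable measurableSet_Ioi

lemma W_nonneg (μ a x t s : ℝ) (hs : 0 < s) : 0 ≤ kerW μ a x t s := by
  unfold kerW; positivity

/-- monotonicity in the parameters -/
lemma W_mono (μ a x t y T s : ℝ) (hs : 0 < s) (ht : 0 < t) (hT : t ≤ T) (hy : y ^ 2 ≤ x ^ 2) :
    kerW μ a x t s ≤ kerW μ a y T s := by
  unfold kerW
  gcongr

lemma int_W (μ a x t : ℝ) (hx : x ≠ 0) (ht : 0 < t) :
    IntegrableOn (kerW μ a x t) (Ioi 0) := by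
  obtain ⟨C, b, hb, hC, h⟩ := rpow_exp_bound a (x ^ 2 / 2) (by positivity)
  have h1 := (integrableOn_rpow_mul_exp_neg_mul_sq (b := 1 / (2 * t)) (by positivity)
    (s := b) (by linarith)).const_mul C
  refine Integrable.mono' h1 (meas_W μ a x t) ?_
  refine (ae_restrict_iff' measurableSet_Ioi).2 (ae_of_all _ fun s hs => ?_)
  have hs : (0:ℝ) < s := hs
  rw [Real.norm_of_nonneg (W_nonneg _ _ _ _ _ hs)]
  have h2 := h s hs
  have h3 : kerW μ a x t s ≤ (s ^ a * Real.exp (-(x ^ 2 / 2 / s))) *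
      Real.exp (-(1 / (2 * t)) * s ^ 2) := by
    unfold kerW
    rw [mul_assoc, ← Real.exp_add]
    gcongr
    have : 0 ≤ μ ^ 2 * s / 2 := by positivity
    have e1 : x ^ 2 / 2 / s = x ^ 2 / (2 * s) := by field_simp
    have e2 : -(1 / (2 * t)) * s ^ 2 = - (s ^ 2 / (2 * t)) := by ring
    rw [e1, e2]; linarith
  calc _ ≤ _ := h3
    _ ≤ (C * s ^ b) * Real.exp (-(1 / (2 * t)) * s ^ 2) := by gcongr
    _ = _ := by ring

lemma W_mul_inv (μ a x t s : ℝ) (hs : 0 < s) : kerW μ (a - 1) x t s = kerW μ a x t s / s := by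
  unfold kerW
  rw [Real.rpow_sub_one hs.ne']; ring

lemma W_mul (μ a x t s : ℝ) (hs : 0 < s) : kerW μ (a + 1) x t s = kerW μ a x t s * s := by
  unfold kerW
  rw [Real.rpow_add_one hs.ne']; ring

lemma J_deriv_x (μ a x t : ℝ) (hx : x ≠ 0) (ht : 0 < t) :
    HasDerivAt (fun y => kerJ μ a y t) (-x * kerJ μ (a - 1) x t) x := by
  have hxp : 0 < |x| := abs_pos.2 hx
  have key := (hasDerivAt_integral_of_dominated_loc_of_deriv_le (𝕜 := ℝ)
    (μ := volume.restrict (Ioi (0:ℝ))) (F := fun y s => kerW μ a y t s)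
    (F' := fun y s => -y * kerW μ (a - 1) y t s) (x₀ := x)
    (bound := fun s => (2 * |x|) * kerW μ (a - 1) (x / 2) t s)
    (Metric.ball_mem_nhds x (half_pos hxp))
    (Eventually.of_forall fun y => meas_W μ a y t) (int_W μ a x t hx ht)
    ((meas_W μ (a - 1) x t).const_mul _) ?_
    ((int_W μ (a - 1) (x / 2) t (by positivity) ht).const_mul _) ?_).2
  · simpa only [integral_const_mul] using! key
  · refine (ae_restrict_iff' measurableSet_Ioi).2 (ae_of_all _ fun s hs y hy => ?_)
    have hs : (0:ℝ) < s := hs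
    rw [Metric.mem_ball, Real.dist_eq] at hy
    have h1 : |y| ≤ 2 * |x| := by
      have := abs_sub_abs_le_abs_sub y x
      linarith
    have h2 : |x / 2| ≤ |y| := by
      have := abs_sub_abs_le_abs_sub x y
      rw [abs_sub_comm] at this
      rw [abs_div, abs_two]
      linarith
    rw [norm_mul, norm_neg, Real.norm_eq_abs, Real.norm_of_nonneg (W_nonneg _ _ _ _ _ hs)]
    exact mul_le_mul h1 (W_mono _ _ _ _ _ _ _ hs ht le_rfl (sq_le_sq.2 h2))
      (W_nonneg _ _ _ _ _ hs) (by positivity)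
  · refine (ae_restrict_iff' measurableSet_Ioi).2 (ae_of_all _ fun s hs y hy => ?_)
    have hs : (0:ℝ) < s := hs
    rw [W_mul_inv _ _ _ _ _ hs]
    unfold kerW
    have h := ((((((hasDerivAt_id y).pow 2).div_const (2 * s)).neg.sub_const
      (μ ^ 2 * s / 2)).sub_const (s ^ 2 / (2 * t))).exp).const_mul (s ^ a)
    refine h.congr_deriv ?_
    simp
    field_simp

lemma J_deriv_t (μ a x t : ℝ) (hx : x ≠ 0) (ht : 0 < t) :
    HasDerivAt (fun τ => kerJ μ a x τ) (1 / (2 * t ^ 2) * kerJ μ (a + 2) x t) t := by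
  have key := (hasDerivAt_integral_of_dominated_loc_of_deriv_le (𝕜 := ℝ)
    (μ := volume.restrict (Ioi (0:ℝ))) (F := fun τ s => kerW μ a x τ s)
    (F' := fun τ s => 1 / (2 * τ ^ 2) * kerW μ (a + 2) x τ s) (x₀ := t)
    (bound := fun s => (1 / (2 * (t / 2) ^ 2)) * kerW μ (a + 2) x (2 * t) s)
    (Metric.ball_mem_nhds t (half_pos ht))
    (Eventually.of_forall fun y => meas_W μ a x y) (int_W μ a x t hx ht)
    ((meas_W μ (a + 2) x t).const_mul _) ?_
    ((int_W μ (a + 2) x (2 * t) hx (by positivity)).const_mul _) ?_).2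
  · simpa only [integral_const_mul] using! key
  · refine (ae_restrict_iff' measurableSet_Ioi).2 (ae_of_all _ fun s hs y hy => ?_)
    have hs : (0:ℝ) < s := hs
    rw [Metric.mem_ball, Real.dist_eq, abs_lt] at hy
    have h1 : t / 2 ≤ y := by linarith
    have h2 : y ≤ 2 * t := by linarith
    have hy0 : 0 < y := by linarith
    rw [norm_mul, Real.norm_of_nonneg (by positivity),
      Real.norm_of_nonneg (W_nonneg _ _ _ _ _ hs)]
    exact mul_le_mul (by gcongr) (W_mono _ _ _ _ _ _ _ hs hy0 h2 le_rfl)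
      (W_nonneg _ _ _ _ _ hs) (by positivity)
  · refine (ae_restrict_iff' measurableSet_Ioi).2 (ae_of_all _ fun s hs y hy => ?_)
    have hs : (0:ℝ) < s := hs
    rw [Metric.mem_ball, Real.dist_eq, abs_lt] at hy
    have hy0 : 0 < y := by linarith
    rw [show a + 2 = a + 1 + 1 by ring, W_mul _ _ _ _ _ hs, W_mul _ _ _ _ _ hs]
    unfold kerW
    have h := (((((hasDerivAt_id y).const_mul 2).fun_inv (by simpa using hy0.ne')).const_mul
      (s ^ 2)).const_sub (-(x ^ 2 / (2 * s)) - μ ^ 2 * s / 2)).exp.const_mul (s ^ a)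
    simp only [id, ← div_eq_mul_inv] at h
    refine h.congr_deriv ?_
    field_simp
    

lemma J_ibp (μ a x t : ℝ) (ha : a ≠ 0) (hx : x ≠ 0) (ht : 0 < t) :
    a * kerJ μ (a - 1) x t + x ^ 2 / 2 * kerJ μ (a - 2) x t - μ ^ 2 / 2 * kerJ μ a x t
      - 1 / t * kerJ μ (a + 1) x t = 0 := by
  have i1 := (int_W μ (a - 1) x t hx ht).const_mul a
  have i2 := (int_W μ (a - 2) x t hx ht).const_mul (x ^ 2 / 2)
  have i3 := (int_W μ a x t hx ht).const_mul (μ ^ 2 / 2)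
  have i4 := (int_W μ (a + 1) x t hx ht).const_mul (1 / t)
  have i12 := i1.add i2
  have i123 := i12.sub i3
  have i := i123.sub i4
  have hd : ∀ s ∈ Ioi (0:ℝ), HasDerivAt (kerW μ a x t)
      (a * kerW μ (a - 1) x t s + x ^ 2 / 2 * kerW μ (a - 2) x t s - μ ^ 2 / 2 * kerW μ a x t s
      - 1 / t * kerW μ (a + 1) x t s) s := by
    intro s hs
    have hs : (0:ℝ) < s := hs
    rw [show a - 2 = a - 1 - 1 by ring, W_mul_inv _ (a - 1) _ _ _ hs, W_mul_inv _ _ _ _ _ hs,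
      W_mul _ _ _ _ _ hs]
    unfold kerW
    have e := (((((hasDerivAt_id s).const_mul 2).fun_inv (by simpa using hs.ne')).const_mul
      (x ^ 2)).neg.sub (((hasDerivAt_id s).const_mul (μ ^ 2)).div_const 2)).sub
      (((hasDerivAt_id s).pow 2).div_const (2 * t))
    have h := (Real.hasDerivAt_rpow_const (p := a) (Or.inl hs.ne')).mul e.exp
    refine h.congr_deriv ?_
    simp only [id, ← div_eq_mul_inv, Pi.sub_apply, Pi.neg_apply, Pi.pow_apply]
    rw [Real.rpow_sub_one hs.ne']
    field_simp
    push_cast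
    ring
  have hz : kerW μ a x t 0 = 0 := by simp [kerW, Real.zero_rpow ha]
  have hc : ContinuousWithinAt (kerW μ a x t) (Ici 0) 0 := by
    obtain ⟨C, b, hb, hC, h⟩ := rpow_exp_bound a (x ^ 2 / 2) (by positivity)
    have hlim : Tendsto (fun s : ℝ => C * s ^ b) (𝓝[≥] 0) (𝓝 0) := by
      have : ContinuousAt (fun s : ℝ => C * s ^ b) 0 :=
        continuousAt_const.mul (Real.continuousAt_rpow_const _ _ (Or.inr (by linarith)))
      have h2 := this.tendsto
      simp only [Real.zero_rpow (show b ≠ 0 by linarith), mul_zero] at h2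
      exact h2.mono_left nhdsWithin_le_nhds
    unfold ContinuousWithinAt
    rw [hz]
    refine tendsto_of_tendsto_of_tendsto_of_le_of_le' tendsto_const_nhds hlim ?_ ?_
    · filter_upwards [self_mem_nhdsWithin] with s hs
      have hs : (0:ℝ) ≤ s := hs
      unfold kerW; positivity
    · filter_upwards [self_mem_nhdsWithin] with s hs
      have hs : (0:ℝ) ≤ s := hs
      rcases hs.eq_or_lt with rfl | hs
      · rw [hz, Real.zero_rpow (by linarith)]; simp
      · refine le_trans ?_ (h s hs)
        unfold kerW
        gcongr
        have e0 : 0 ≤ μ ^ 2 * s / 2 := by positivity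
        have e3 : 0 ≤ s ^ 2 / (2 * t) := by positivity
        have e1 : x ^ 2 / 2 / s = x ^ 2 / (2 * s) := by field_simp
        rw [e1]; linarith
  have hinf := tendsto_zero_of_hasDerivAt_of_integrableOn_Ioi hd i (int_W μ a x t hx ht)
  have := integral_Ioi_of_hasDerivAt_of_tendsto hc hd i hinf
  rw [hz, sub_zero] at this
  rw [← this]
  unfold kerJ
  have e1 := integral_sub i123 i4
  have e2 := integral_sub i12 i3
  have e3 := integral_add i1 i2
  simp only [Pi.add_apply, Pi.sub_apply, integral_const_mul] at e1 e2 e3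
  rw [e1, e2, e3]

lemma density_eq (μ x t : ℝ) (ht : 0 < t) : iterBMDriftDensity μ x t
    = (1 / π) * (Real.sqrt t)⁻¹ * (Real.exp (μ * x) * kerJ μ (-1 / 2) x t) := by
  unfold iterBMDriftDensity kerJ
  rw [← integral_const_mul, ← integral_const_mul, ← integral_const_mul]
  refine setIntegral_congr_fun measurableSet_Ioi fun s hs => ?_
  have hs : (0:ℝ) < s := hs
  have e1 : Real.exp (-(x - μ * s) ^ 2 / (2 * s)) * Real.exp (-s ^ 2 / (2 * t)) =
      Real.exp (μ * x) * Real.exp (-(x ^ 2 / (2 * s)) - μ ^ 2 * s / 2 - s ^ 2 / (2 * t)) := by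
    rw [← Real.exp_add, ← Real.exp_add]
    congr 1
    field_simp
    ring
  have e2 : s ^ (-1 / 2 : ℝ) = (Real.sqrt s)⁻¹ := by
    rw [Real.sqrt_eq_rpow, ← Real.rpow_neg hs.le]; norm_num
  have e3 : Real.sqrt (2 * π) * Real.sqrt (2 * π) = 2 * π :=
    Real.mul_self_sqrt (by positivity)
  have e4 : (Real.sqrt (2 * π))⁻¹ * (Real.sqrt (2 * π))⁻¹ = 1 / (2 * π) := by
    rw [← mul_inv, e3, one_div]
  unfold kerW
  beta_reduce
  rw [e2, Real.sqrt_mul (by positivity) s, Real.sqrt_mul (by positivity) t]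
  calc _ = 2 * ((Real.sqrt (2 * π))⁻¹ * (Real.sqrt (2 * π))⁻¹) * (Real.sqrt t)⁻¹ *
        (Real.sqrt s)⁻¹ * (Real.exp (-(x - μ * s) ^ 2 / (2 * s)) *
        Real.exp (-s ^ 2 / (2 * t))) := by
        simp only [div_eq_mul_inv, mul_inv]; ring
    _ = _ := by
        rw [e1, e4]; field_simp

lemma deriv_of_eqOn {f g : ℝ → ℝ} {g' x : ℝ} (hx : x ≠ 0) (h : ∀ y, y ≠ 0 → f y = g y)
    (hg : HasDerivAt g g' x) : deriv f x = g' := by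
  have : f =ᶠ[𝓝 x] g := by
    filter_upwards [isOpen_ne.mem_nhds hx] with y hy using h y hy
  rw [this.deriv_eq, hg.deriv]

/-- `exp (μ y)`-conjugated derivative step -/
lemma exp_step (K μ x : ℝ) {g : ℝ → ℝ} {g' : ℝ} (hg : HasDerivAt g g' x) :
    HasDerivAt (fun y => K * (Real.exp (μ * y) * g y))
      (K * (Real.exp (μ * x) * (g' + μ * g x))) x := by
  have h1 : HasDerivAt (fun y => Real.exp (μ * y)) (Real.exp (μ * x) * (μ * 1)) x :=
    ((hasDerivAt_id x).const_mul μ).exp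
  refine ((h1.mul hg).const_mul K).congr_deriv ?_
  ring

/-- For `x ≠ 0`, `t > 0`, the density of the iterated Brownian motion with drift satisfies
`∂p/∂t = (1/8)∂⁴p/∂x⁴ − (μ/2)∂³p/∂x³ + (μ²/2)∂²p/∂x²`, that is,
`∂p/∂t = (1/2)((1/2)∂²/∂x² − μ ∂/∂x)² p`. -/
theorem iterBMDriftDensity_fourth_order_pde (μ : ℝ) :
    ∀ x t : ℝ, x ≠ 0 → 0 < t →
      deriv (fun τ => iterBMDriftDensity μ x τ) t
          = (1 / 8) * iteratedDeriv 4 (fun y => iterBMDriftDensity μ y t) x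
            - (μ / 2) * iteratedDeriv 3 (fun y => iterBMDriftDensity μ y t) x
            + (μ ^ 2 / 2) * iteratedDeriv 2 (fun y => iterBMDriftDensity μ y t) x
        ∧ deriv (fun τ => iterBMDriftDensity μ x τ) t
          = (1 / 2) * driftOp μ (driftOp μ (fun y => iterBMDriftDensity μ y t)) x := by
  intro x t hx ht
  set J : ℕ → ℝ → ℝ := fun n y => kerJ μ (-1 / 2 - n) y t with hJ
  have dJ : ∀ n y, y ≠ 0 → HasDerivAt (J n) (-y * J (n + 1) y) y := by
    intro n y hy
    have := J_deriv_x μ (-1 / 2 - n) y t hy ht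
    rw [show (-1 / 2 - (n:ℝ) - 1) = -1 / 2 - ((n + 1 : ℕ) : ℝ) by push_cast; ring] at this
    exact this
  set g0 : ℝ → ℝ := J 0 with hg0
  set g1 : ℝ → ℝ := fun y => -y * J 1 y with hg1
  set g2 : ℝ → ℝ := fun y => -J 1 y + y ^ 2 * J 2 y with hg2
  set g3 : ℝ → ℝ := fun y => 3 * y * J 2 y - y ^ 3 * J 3 y with hg3
  set g4 : ℝ → ℝ := fun y => 3 * J 2 y - 6 * y ^ 2 * J 3 y + y ^ 4 * J 4 y with hg4
  have d0 : ∀ y, y ≠ 0 → HasDerivAt g0 (g1 y) y := fun y hy => dJ 0 y hy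
  have d1 : ∀ y, y ≠ 0 → HasDerivAt g1 (g2 y) y := fun y hy => by
    refine ((hasDerivAt_id y).neg.mul (dJ 1 y hy)).congr_deriv ?_
    simp [hg2]; ring
  have d2 : ∀ y, y ≠ 0 → HasDerivAt g2 (g3 y) y := fun y hy => by
    refine ((dJ 1 y hy).neg.add ((hasDerivAt_pow 2 y).mul (dJ 2 y hy))).congr_deriv ?_
    simp [hg3]; ring
  have d3 : ∀ y, y ≠ 0 → HasDerivAt g3 (g4 y) y := fun y hy => by
    refine ((((hasDerivAt_id y).const_mul 3).mul (dJ 2 y hy)).sub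
      ((hasDerivAt_pow 3 y).mul (dJ 3 y hy))).congr_deriv ?_
    simp [hg4]; ring
  set K : ℝ := (1 / π) * (Real.sqrt t)⁻¹ with hK
  set p : ℝ → ℝ := fun y => iterBMDriftDensity μ y t with hp
  set f0 : ℝ → ℝ := fun y => K * (Real.exp (μ * y) * g0 y) with hf0
  set f1 : ℝ → ℝ := fun y => K * (Real.exp (μ * y) * (g1 y + μ * g0 y)) with hf1
  set f2 : ℝ → ℝ := fun y => K * (Real.exp (μ * y) * (g2 y + 2 * μ * g1 y + μ ^ 2 * g0 y)) with hf2
  set f3 : ℝ → ℝ := fun y => K * (Real.exp (μ * y) *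
    (g3 y + 3 * μ * g2 y + 3 * μ ^ 2 * g1 y + μ ^ 3 * g0 y)) with hf3
  set f4 : ℝ → ℝ := fun y => K * (Real.exp (μ * y) *
    (g4 y + 4 * μ * g3 y + 6 * μ ^ 2 * g2 y + 4 * μ ^ 3 * g1 y + μ ^ 4 * g0 y)) with hf4
  have q0 : ∀ y, y ≠ 0 → HasDerivAt f0 (f1 y) y := fun y hy => exp_step K μ y (d0 y hy)
  have q1 : ∀ y, y ≠ 0 → HasDerivAt f1 (f2 y) y := fun y hy => by
    refine (exp_step K μ y ((d1 y hy).add ((d0 y hy).const_mul μ))).congr_deriv ?_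
    simp only [hf2, Pi.add_apply]; ring
  have q2 : ∀ y, y ≠ 0 → HasDerivAt f2 (f3 y) y := fun y hy => by
    refine (exp_step K μ y (((d2 y hy).add ((d1 y hy).const_mul (2 * μ))).add
      ((d0 y hy).const_mul (μ ^ 2)))).congr_deriv ?_
    simp only [hf3, Pi.add_apply]; ring
  have q3 : ∀ y, y ≠ 0 → HasDerivAt f3 (f4 y) y := fun y hy => by
    refine (exp_step K μ y ((((d3 y hy).add ((d2 y hy).const_mul (3 * μ))).add
      ((d1 y hy).const_mul (3 * μ ^ 2))).add ((d0 y hy).const_mul (μ ^ 3)))).congr_deriv ?_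
    simp only [hf4, Pi.add_apply]; ring
  have p0 : ∀ y, y ≠ 0 → p y = f0 y := fun y _ => by
    simp only [hp, hf0, hg0, hJ, hK]
    rw [density_eq μ y t ht]; simp
  have p1 : ∀ y, y ≠ 0 → deriv p y = f1 y := fun y hy => deriv_of_eqOn hy p0 (q0 y hy)
  have p2 : ∀ y, y ≠ 0 → iteratedDeriv 2 p y = f2 y := fun y hy => by
    rw [iteratedDeriv_succ, iteratedDeriv_one]
    exact deriv_of_eqOn hy p1 (q1 y hy)
  have p3 : ∀ y, y ≠ 0 → iteratedDeriv 3 p y = f3 y := fun y hy => by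
    rw [iteratedDeriv_succ]
    exact deriv_of_eqOn hy p2 (q2 y hy)
  have p4 : ∀ y, y ≠ 0 → iteratedDeriv 4 p y = f4 y := fun y hy => by
    rw [iteratedDeriv_succ]
    exact deriv_of_eqOn hy p3 (q3 y hy)
  have l0 : ∀ y, y ≠ 0 → driftOp μ p y = 1 / 2 * f2 y - μ * f1 y := fun y hy => by
    unfold driftOp; rw [p2 y hy, p1 y hy]
  have l1 : ∀ y, y ≠ 0 → deriv (driftOp μ p) y = 1 / 2 * f3 y - μ * f2 y := fun y hy =>
    deriv_of_eqOn hy l0 (((q2 y hy).const_mul (1 / 2)).sub ((q1 y hy).const_mul μ))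
  have l2 : iteratedDeriv 2 (driftOp μ p) x = 1 / 2 * f4 x - μ * f3 x := by
    rw [iteratedDeriv_succ, iteratedDeriv_one]
    exact deriv_of_eqOn hx l1 (((q3 x hx).const_mul (1 / 2)).sub ((q2 x hx).const_mul μ))
  have ll : driftOp μ (driftOp μ p) x =
      1 / 2 * (1 / 2 * f4 x - μ * f3 x) - μ * (1 / 2 * f3 x - μ * f2 x) := by
    rw [← l2, ← l1 x hx]; rfl
  have hst : 0 < Real.sqrt t := Real.sqrt_pos.2 ht
  have hsq : Real.sqrt t ^ 2 = t := Real.sq_sqrt ht.le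
  have ht' : deriv (fun τ => iterBMDriftDensity μ x τ) t =
      K * Real.exp (μ * x) * (-(1 / (2 * t)) * kerJ μ (-1 / 2) x t +
        1 / (2 * t ^ 2) * kerJ μ (-1 / 2 + 2) x t) := by
    have heq : (fun τ => iterBMDriftDensity μ x τ) =ᶠ[𝓝 t]
        fun τ => (1 / π) * (Real.sqrt τ)⁻¹ * (Real.exp (μ * x) * kerJ μ (-1 / 2) x τ) := by
      filter_upwards [isOpen_Ioi.mem_nhds (show t ∈ Ioi (0:ℝ) from ht)] with τ hτ
      exact density_eq μ x τ hτ
    rw [heq.deriv_eq]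
    have hs := ((Real.hasDerivAt_sqrt ht.ne').fun_inv hst.ne').const_mul (1 / π)
    have := hs.fun_mul ((J_deriv_t μ (-1 / 2) x t hx ht).const_mul (Real.exp (μ * x)))
    rw [this.deriv, hsq, hK]
    field_simp
  have hmain : deriv (fun τ => iterBMDriftDensity μ x τ) t
      = (1 / 8) * f4 x - (μ / 2) * f3 x + (μ ^ 2 / 2) * f2 x := by
    rw [ht']
    have b1 := J_ibp μ (1 / 2) x t (by norm_num) hx ht
    have b2 := J_ibp μ (-1 / 2) x t (by norm_num) hx ht
    have b3 := J_ibp μ (-1 / 2 - 1) x t (by norm_num) hx ht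
    have b4 := J_ibp μ (-1 / 2 - 2) x t (by norm_num) hx ht
    simp only [hf4, hf3, hf2, hg4, hg3, hg2, hg1, hg0, hJ]
    norm_num at b1 b2 b3 b4 ⊢
    linear_combination K * Real.exp (μ * x) * (-(1 / (2 * t)) * b1 + μ ^ 2 / 4 * b2 + 1 / 4 * b3
      - x ^ 2 / 4 * b4)
  refine ⟨?_, ?_⟩
  · rw [hmain, p4 x hx, p3 x hx, p2 x hx]
  · rw [hmain, ll]; ring
end

section
/- Let μ ∈ ℝ and define p : ℝ × (0,∞) → ℝ by p(x,t) = 2 ∫₀^∞ (exp(−(x−μs)²/(2s))/√(2πs)) · (exp(−s²/(2t))/√(2πt)) ds. Then for every η > 0 and β ∈ ℝ, the joint Laplace–Fourier transform satisfies ∫₀^∞ e^{−ηt} ∫_{−∞}^{+∞} e^{iβx} p(x,t) dx dt = η^{−1/2} / ( β²/2^{3/2} − iβμ/√2 + √η ). -/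
open Real MeasureTheory Complex

open ProbabilityTheory Filter Topology

lemma aux_ftc {g g' : ℝ → ℝ} {l m : ℝ} (h0 : Tendsto g (𝓝[>] 0) (𝓝 m))
    (hd : ∀ x ∈ Set.Ioi (0:ℝ), HasDerivAt g (g' x) x) (hn : ∀ x ∈ Set.Ioi (0:ℝ), 0 ≤ g' x)
    (ht : Tendsto g atTop (𝓝 l)) :
    IntegrableOn g' (Set.Ioi 0) ∧ ∫ x in Set.Ioi (0:ℝ), g' x = l - m := by
  have hc : ContinuousWithinAt (Function.update g 0 m) (Set.Ici 0) 0 := by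
    rw [continuousWithinAt_update_same]
    simpa using h0
  have hd' : ∀ x ∈ Set.Ioi (0:ℝ), HasDerivAt (Function.update g 0 m) (g' x) x := by
    intro x hx
    refine (hd x hx).congr_of_eventuallyEq ?_
    filter_upwards [lt_mem_nhds (show (0:ℝ) < x from hx)] with y hy
    simp [Function.update, hy.ne']
  have ht' : Tendsto (Function.update g 0 m) atTop (𝓝 l) := by
    refine ht.congr' ?_
    filter_upwards [eventually_gt_atTop (0:ℝ)] with y hy
    simp [Function.update, hy.ne']
  refine ⟨integrableOn_Ioi_deriv_of_nonneg hc hd' hn ht', ?_⟩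
  rw [integral_Ioi_of_hasDerivAt_of_nonneg hc hd' hn ht']
  simp

noncomputable def auxE (y : ℝ) : ℝ := ∫ x in (0:ℝ)..y, Real.exp (-1 * x ^ 2)

lemma auxE_deriv (y : ℝ) : HasDerivAt auxE (Real.exp (-1 * y ^ 2)) y := by
  have hc : Continuous (fun x : ℝ => Real.exp (-1 * x ^ 2)) := by fun_prop
  exact intervalIntegral.integral_hasDerivAt_right (hc.intervalIntegrable _ _)
    (hc.stronglyMeasurableAtFilter _ _) hc.continuousAt

lemma auxE_top : Tendsto auxE atTop (𝓝 (√π / 2)) := by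
  have := intervalIntegral_tendsto_integral_Ioi (μ := volume) (0:ℝ)
    (integrable_exp_neg_mul_sq (b := 1) one_pos).integrableOn tendsto_id
  rw [integral_gaussian_Ioi] at this
  have h : auxE = fun y => ∫ x in (0:ℝ)..id y, Real.exp (-1 * x ^ 2) := rfl
  rw [h]
  simpa using this

lemma auxE_bot : Tendsto auxE atBot (𝓝 (-(√π / 2))) := by
  have h : ∀ y, auxE y = - auxE (-y) := by
    intro y
    unfold auxE
    have := intervalIntegral.integral_comp_neg (a := 0) (b := y) (fun x : ℝ => Real.exp (-1 * x ^ 2))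
    simp only [neg_sq, neg_zero] at this
    rw [this, intervalIntegral.integral_symm]
  have := (auxE_top.comp tendsto_neg_atBot_atTop).neg
  refine this.congr ?_
  intro y
  rw [h y]; rfl

lemma sqrt_tendsto_zero : Tendsto (fun t : ℝ => √t) (𝓝[>] 0) (𝓝[>] 0) := by
  refine tendsto_nhdsWithin_iff.2 ⟨?_, ?_⟩
  · have := (Real.continuous_sqrt.tendsto 0).mono_left (nhdsWithin_le_nhds (s := Set.Ioi 0))
    simpa using this
  · filter_upwards [self_mem_nhdsWithin] with t ht
    exact Real.sqrt_pos.2 ht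

lemma aux_glasser {a b : ℝ} (ha : 0 < a) (hb : 0 < b) :
    IntegrableOn (fun t : ℝ => a * Real.exp (-1 * (a * √t - b / √t) ^ 2) / √t) (Set.Ioi 0) ∧
    ∫ t in Set.Ioi (0:ℝ), a * Real.exp (-1 * (a * √t - b / √t) ^ 2) / √t = √π := by
  have hs0 : Tendsto (fun t : ℝ => a * √t) (𝓝[>] 0) (𝓝 0) := by
    simpa using (sqrt_tendsto_zero.mono_right nhdsWithin_le_nhds).const_mul a
  have hi0 : Tendsto (fun t : ℝ => b / √t) (𝓝[>] 0) atTop := by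
    simp only [div_eq_mul_inv]
    exact (tendsto_inv_nhdsGT_zero.comp sqrt_tendsto_zero).const_mul_atTop hb
  have hst : Tendsto (fun t : ℝ => a * √t) atTop atTop := Real.tendsto_sqrt_atTop.const_mul_atTop ha
  have hit : Tendsto (fun t : ℝ => b / √t) atTop (𝓝 0) := Real.tendsto_sqrt_atTop.const_div_atTop b
  have key := aux_ftc (g := fun t => auxE (a * √t - b / √t) + Real.exp (4 * a * b) * auxE (a * √t + b / √t))
    (g' := fun t : ℝ => a * Real.exp (-1 * (a * √t - b / √t) ^ 2) / √t)
    (m := -(√π / 2) + Real.exp (4 * a * b) * (√π / 2)) (l := (√π / 2) + Real.exp (4 * a * b) * (√π / 2))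
    ?_ ?_ ?_ ?_
  · refine ⟨key.1, key.2.trans ?_⟩
    ring
  · refine (auxE_bot.comp ?_).add ((auxE_top.comp ?_).const_mul _)
    · simpa [sub_eq_add_neg] using hs0.add_atBot (tendsto_neg_atTop_atBot.comp hi0)
    · exact hs0.add_atTop hi0
  · intro t ht
    have ht : 0 < t := ht
    have hq : 0 < √t := Real.sqrt_pos.2 ht
    have hsq := Real.hasDerivAt_sqrt ht.ne'
    have h1 := hsq.const_mul a
    have h2 := (hasDerivAt_const t b).div hsq hq.ne'
    have h3 := ((auxE_deriv _).comp t (h1.sub h2)).add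
      (((auxE_deriv _).comp t (h1.add h2)).const_mul (Real.exp (4 * a * b)))
    refine h3.congr_deriv ?_
    have he : Real.exp (4 * a * b) * Real.exp (-1 * (a * √t + b / √t) ^ 2) =
        Real.exp (-1 * (a * √t - b / √t) ^ 2) := by
      rw [← Real.exp_add]; congr 1; field_simp; ring
    simp only [Pi.sub_apply, Pi.add_apply, Pi.div_apply]
    rw [← mul_assoc, he]
    field_simp
    ring
  · intro t ht
    positivity
  · refine (auxE_top.comp ?_).add ((auxE_top.comp ?_).const_mul _)
    · simpa [sub_eq_add_neg] using tendsto_atTop_add_const_right _ 0 hst |>.atTop_add hit.neg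
    · exact hst.atTop_add hit

lemma aux_laplace {η s : ℝ} (hη : 0 < η) (hs : 0 < s) :
    IntegrableOn (fun t : ℝ => Real.exp (-η * t) * (Real.exp (-s ^ 2 / (2 * t)) / √(2 * π * t)))
      (Set.Ioi 0) ∧
    ∫ t in Set.Ioi (0:ℝ), Real.exp (-η * t) * (Real.exp (-s ^ 2 / (2 * t)) / √(2 * π * t)) =
      Real.exp (-(√2 * √η) * s) / (√2 * √η) := by
  have ha := Real.sqrt_pos.2 hη
  have h2 : 0 < √(2:ℝ) := by positivity
  have h22 : √(2:ℝ) ^ 2 = 2 := Real.sq_sqrt (by norm_num)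
  obtain ⟨hi, hv⟩ := aux_glasser ha (b := s / √2) (by positivity)
  have heq : ∀ t ∈ Set.Ioi (0:ℝ), Real.exp (-η * t) * (Real.exp (-s ^ 2 / (2 * t)) / √(2 * π * t)) =
      (Real.exp (-(√2 * √η) * s) / (√2 * √η * √π)) *
      (√η * Real.exp (-1 * (√η * √t - s / √2 / √t) ^ 2) / √t) := by
    intro t ht
    have ht : 0 < t := ht
    have hq : 0 < √t := Real.sqrt_pos.2 ht
    have hpi : 0 < √π := by positivity
    have hE : Real.exp (-η * t) * Real.exp (-s ^ 2 / (2 * t)) = Real.exp (-(√2 * √η) * s) *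
        Real.exp (-1 * (√η * √t - s / √2 / √t) ^ 2) := by
      rw [← Real.exp_add, ← Real.exp_add]; congr 1
      have e1 : (√η * √t - s / √2 / √t) ^ 2 = η * t + s ^ 2 / (2 * t) - 2 * √η * s / √2 := by
        have : (√η * √t - s / √2 / √t) ^ 2 = √η ^ 2 * √t ^ 2 + s ^ 2 / (√2 ^ 2 * √t ^ 2) - 2 * √η * s / √2 := by
          field_simp
          ring
        rw [this, h22, Real.sq_sqrt hη.le, Real.sq_sqrt ht.le]
      rw [e1]
      have e2 : 2 * √η * s / √2 = √2 * √η * s := by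
        field_simp
        linear_combination (-1) * h22
      rw [e2]; ring
    rw [Real.sqrt_mul (by positivity), Real.sqrt_mul (by norm_num), ← mul_div_assoc, hE]
    field_simp
  constructor
  · refine IntegrableOn.congr_fun (hi.const_mul _) (fun t ht => (heq t ht).symm) measurableSet_Ioi
  · rw [setIntegral_congr_fun measurableSet_Ioi heq, integral_const_mul, hv]
    have hpi : 0 < √π := by positivity
    field_simp

lemma aux_pdf (μ : ℝ) {s : ℝ} (hs : 0 < s) (x : ℝ) :
    Real.exp (-(x - μ * s) ^ 2 / (2 * s)) / √(2 * π * s) =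
      gaussianPDFReal (μ * s) s.toNNReal x := by
  simp only [gaussianPDFReal_def, Real.coe_toNNReal s hs.le]
  rw [div_eq_inv_mul]

lemma aux_fourier (μ β : ℝ) {s : ℝ} (hs : 0 < s) :
    ∫ x : ℝ, cexp (I * β * x) * ((Real.exp (-(x - μ * s) ^ 2 / (2 * s)) / √(2 * π * s) : ℝ) : ℂ) =
      cexp (-(β ^ 2 / 2 - I * β * μ) * s) := by
  have hv : s.toNNReal ≠ 0 := by
    simpa using hs
  have h := charFun_gaussianReal (μ := μ * s) (v := s.toNNReal) β
  rw [charFun_apply_real, integral_gaussianReal_eq_integral_smul hv] at h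
  simp only [aux_pdf μ hs]
  calc _ = ∫ x : ℝ, gaussianPDFReal (μ * s) s.toNNReal x • cexp (β * x * I) := by
        congr 1; ext x
        rw [Complex.real_smul, mul_comm]; congr 2; ring
    _ = _ := by
        rw [h]; congr 1; rw [Real.coe_toNNReal s hs.le]; push_cast; ring

lemma aux_inner (μ β : ℝ) {t : ℝ} (ht : 0 < t) :
    ∫ x : ℝ, cexp (I * β * x) * (iterBMDriftDensity μ x t : ℂ) =
      2 * ∫ s in Set.Ioi (0:ℝ), cexp (-(β ^ 2 / 2 - I * β * μ) * s) *
        ((Real.exp (-s ^ 2 / (2 * t)) / √(2 * π * t) : ℝ) : ℂ) := by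
  have e1 : ∀ x : ℝ, cexp (I * β * x) * (iterBMDriftDensity μ x t : ℂ) =
      2 * ∫ s in Set.Ioi (0:ℝ), cexp (I * β * x) *
        ((Real.exp (-(x - μ * s) ^ 2 / (2 * s)) / √(2 * π * s) : ℝ) : ℂ) *
        ((Real.exp (-s ^ 2 / (2 * t)) / √(2 * π * t) : ℝ) : ℂ) := by
    intro x
    unfold iterBMDriftDensity
    rw [Complex.ofReal_mul, ← integral_complex_ofReal]
    simp only [mul_assoc]
    rw [integral_const_mul]
    push_cast
    ring
  simp only [e1]
  rw [integral_const_mul, integral_integral_swap]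
  · congr 1
    refine setIntegral_congr_fun measurableSet_Ioi (fun s hs => ?_)
    rw [integral_mul_const, aux_fourier μ β hs]
  · have hnorm : ∀ x s : ℝ, ‖cexp (I * β * x) *
        ((Real.exp (-(x - μ * s) ^ 2 / (2 * s)) / √(2 * π * s) : ℝ) : ℂ) *
        ((Real.exp (-s ^ 2 / (2 * t)) / √(2 * π * t) : ℝ) : ℂ)‖ =
        (Real.exp (-(x - μ * s) ^ 2 / (2 * s)) / √(2 * π * s)) *
        (Real.exp (-s ^ 2 / (2 * t)) / √(2 * π * t)) := by
      intro x s
      rw [norm_mul, norm_mul, Complex.norm_exp, Complex.norm_of_nonneg (by positivity),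
        Complex.norm_of_nonneg (by positivity)]
      simp
    have hm : Measurable (Function.uncurry fun (x s : ℝ) => cexp (I * β * x) *
        ((Real.exp (-(x - μ * s) ^ 2 / (2 * s)) / √(2 * π * s) : ℝ) : ℂ) *
        ((Real.exp (-s ^ 2 / (2 * t)) / √(2 * π * t) : ℝ) : ℂ)) := by
      unfold Function.uncurry
      fun_prop
    rw [integrable_prod_iff' hm.aestronglyMeasurable]
    constructor
    · refine (ae_restrict_iff' measurableSet_Ioi).2 (ae_of_all _ fun s hs => ?_)
      have hi := (integrable_gaussianPDFReal (μ * s) s.toNNReal).mul_const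
        (Real.exp (-s ^ 2 / (2 * t)) / √(2 * π * t))
      refine hi.mono' (hm.comp measurable_prodMk_right).aestronglyMeasurable
        (ae_of_all _ fun x => ?_)
      rw [← aux_pdf μ hs]
      exact (hnorm x s).le
    · have hg : Integrable (fun s : ℝ => Real.exp (-s ^ 2 / (2 * t)) / √(2 * π * t)) := by
        refine Integrable.div_const ?_ _
        refine (integrable_exp_neg_mul_sq (b := 1 / (2 * t)) (by positivity)).congr
          (ae_of_all _ fun s => ?_)
        simp only []
        congr 1; ring
      refine IntegrableOn.congr_fun hg.integrableOn (fun s hs => ?_) measurableSet_Ioi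
      simp only [Function.uncurry, hnorm]
      have hv : s.toNNReal ≠ 0 := by
        simpa using hs
      rw [integral_mul_const]
      simp only [aux_pdf μ hs]
      rw [integral_gaussianPDFReal_eq_one _ hv, one_mul]

theorem aux_main (μ : ℝ) (η β : ℝ) (hη : 0 < η) :
      (∫ t in Set.Ioi (0 : ℝ), Complex.exp (-(η : ℂ) * t) *
          ∫ x : ℝ, Complex.exp (Complex.I * β * x) * (iterBMDriftDensity μ x t : ℂ))
        = 2 * ((√2 * √η : ℝ) : ℂ)⁻¹ * (β ^ 2 / 2 - I * β * μ + (√2 * √η : ℝ))⁻¹ := by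
  set z : ℂ := β ^ 2 / 2 - I * β * μ with hz
  have hzre : 0 ≤ z.re := by
    have : z.re = β ^ 2 / 2 := by
      simp [hz, ← Complex.ofReal_pow]
    rw [this]; positivity
  set c : ℝ := √2 * √η with hc
  have hcpos : 0 < c := by positivity
  have e1 : ∀ t ∈ Set.Ioi (0:ℝ), Complex.exp (-(η : ℂ) * t) *
          ∫ x : ℝ, Complex.exp (Complex.I * β * x) * (iterBMDriftDensity μ x t : ℂ) =
      2 * ∫ s in Set.Ioi (0:ℝ), cexp (-z * s) *
        ((Real.exp (-η * t) * (Real.exp (-s ^ 2 / (2 * t)) / √(2 * π * t)) : ℝ) : ℂ) := by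
    intro t ht
    rw [aux_inner μ β ht, mul_left_comm, ← integral_const_mul]
    congr 2
    ext s
    push_cast
    ring
  rw [setIntegral_congr_fun measurableSet_Ioi e1, integral_const_mul, integral_integral_swap]
  · have e2 : ∀ s ∈ Set.Ioi (0:ℝ), ∫ t in Set.Ioi (0:ℝ), cexp (-z * s) *
        ((Real.exp (-η * t) * (Real.exp (-s ^ 2 / (2 * t)) / √(2 * π * t)) : ℝ) : ℂ) =
        (c : ℂ)⁻¹ * cexp (-(z + c) * s) := by
      intro s hs
      rw [integral_const_mul, integral_complex_ofReal, (aux_laplace hη hs).2, ← hc]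
      push_cast
      rw [mul_div_assoc', ← Complex.exp_add, div_eq_inv_mul]
      congr 2; ring
    rw [setIntegral_congr_fun measurableSet_Ioi e2, integral_const_mul,
      integral_exp_mul_complex_Ioi (by simp; linarith)]
    simp only [Complex.ofReal_zero, mul_zero, Complex.exp_zero, neg_div_neg_eq]
    rw [one_div, mul_assoc]
  · have hnorm : ∀ t s : ℝ, ‖cexp (-z * s) *
        ((Real.exp (-η * t) * (Real.exp (-s ^ 2 / (2 * t)) / √(2 * π * t)) : ℝ) : ℂ)‖ =
        Real.exp (-z.re * s) *
        (Real.exp (-η * t) * (Real.exp (-s ^ 2 / (2 * t)) / √(2 * π * t))) := by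
      intro t s
      rw [norm_mul, Complex.norm_exp, Complex.norm_of_nonneg (by positivity)]
      simp
    have hm : Measurable (Function.uncurry fun (t s : ℝ) => cexp (-z * s) *
        ((Real.exp (-η * t) * (Real.exp (-s ^ 2 / (2 * t)) / √(2 * π * t)) : ℝ) : ℂ)) := by
      unfold Function.uncurry
      fun_prop
    rw [integrable_prod_iff' hm.aestronglyMeasurable]
    constructor
    · refine (ae_restrict_iff' measurableSet_Ioi).2 (ae_of_all _ fun s hs => ?_)
      exact ((aux_laplace hη hs).1.ofReal (𝕜 := ℂ)).const_mul (cexp (-z * s))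
    · have hg : IntegrableOn (fun s : ℝ => Real.exp (-(z.re + c) * s) / c) (Set.Ioi 0) :=
        (integrableOn_exp_mul_Ioi (by linarith) 0).div_const c
      refine IntegrableOn.congr_fun hg (fun s hs => ?_) measurableSet_Ioi
      simp only [Function.uncurry, hnorm]
      rw [integral_const_mul, (aux_laplace hη hs).2, ← hc, mul_div_assoc', ← Real.exp_add]
      congr 2; ring

/-- The joint Laplace–Fourier transform of the density of the iterated Brownian motion
with drift equals `η^{−1/2} / (β²/2^{3/2} − iβμ/√2 + √η)`. -/
theorem iterBMDriftDensity_laplace_fourier (μ : ℝ) :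
    ∀ η β : ℝ, 0 < η →
      (∫ t in Set.Ioi (0 : ℝ), Complex.exp (-(η : ℂ) * t) *
          ∫ x : ℝ, Complex.exp (Complex.I * β * x) * (iterBMDriftDensity μ x t : ℂ))
        = ((Real.sqrt η)⁻¹ : ℂ) /
            ((β ^ 2 / (2 : ℝ) ^ ((3 : ℝ) / 2) : ℝ)
              - Complex.I * β * μ / (Real.sqrt 2 : ℂ) + (Real.sqrt η : ℂ)) := by

  intro η β hη
  rw [aux_main μ η β hη]
  have h2 : (√2 : ℝ) ^ 2 = 2 := Real.sq_sqrt (by norm_num)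
  have hp : (2:ℝ) ^ ((3:ℝ) / 2) = 2 * √2 := by
    rw [show (3:ℝ) / 2 = 1 + 1 / 2 by norm_num, Real.rpow_add (by norm_num), Real.rpow_one,
      ← Real.sqrt_eq_rpow]
  rw [hp]
  have h2c : ((√2 : ℝ) : ℂ) ^ 2 = 2 := by exact_mod_cast h2
  have hs2 : ((√2 : ℝ) : ℂ) ≠ 0 := by
    intro h; rw [h] at h2c; norm_num at h2c
  have e : ((β : ℂ) ^ 2 / 2 - I * β * μ + (√2 * √η : ℝ)) =
      (√2 : ℝ) * (((β ^ 2 / (2 * √2) : ℝ) : ℂ) - I * β * μ / (√2 : ℝ) + (√η : ℝ)) := by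
    push_cast
    field_simp
  rw [e, Complex.ofReal_mul, mul_inv, mul_inv]
  have e3 : (2 : ℂ) * ((√2 : ℝ) : ℂ)⁻¹ * ((√2 : ℝ) : ℂ)⁻¹ = 1 := by
    rw [mul_assoc, ← mul_inv, ← sq, h2c]; norm_num
  generalize (((β ^ 2 / (2 * √2) : ℝ) : ℂ) - I * β * μ / (√2 : ℝ) + (√η : ℝ)) = w
  rw [div_eq_mul_inv]
  linear_combination (((√η : ℝ) : ℂ)⁻¹ * w⁻¹) * e3
end
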